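/- Let (R_i, R_j) be a pair of adjacent classes of G5 (that is, (R₁,R₂) or (R₃,R₄)); each element of R_j commutes with exactly one element of R_i. Let t₁ ∈ R_i and t₃ ∈ R_j be non-commuting. Then the Hurwitz orbit of the pair (t₁, t₃) has exactly four elements; exactly four distinct reflections appear as entries of pairs in this orbit, namely t₁, t₂ ∈ R_i and t₃, t₄ ∈ R_j; and R_i = {t₁, t₂, s₃, s₄}, where s₃ (respectively s₄) is the unique element of R_i commuting with t₃ (respectively t₄). -/

import Mathlib

noncomputable section

open Matrix Complex

/-- The `i`-th Hurwitz move on length-`k` tuples of group elements. -/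
def IsHurwitzMove {G : Type*} [Group G] {k : ℕ} (t t' : Fin k → G) : Prop :=
  ∃ i : ℕ, ∃ h : i + 1 < k,
    t' ⟨i, Nat.lt_of_succ_lt h⟩ = t ⟨i + 1, h⟩ ∧
    t' ⟨i + 1, h⟩ = (t ⟨i + 1, h⟩)⁻¹ * t ⟨i, Nat.lt_of_succ_lt h⟩ * t ⟨i + 1, h⟩ ∧
    ∀ j : Fin k, (j : ℕ) ≠ i → (j : ℕ) ≠ i + 1 → t' j = t j

/-- Two tuples lie in the same Hurwitz orbit. -/
def SameHurwitzOrbit {G : Type*} [Group G] {k : ℕ} (t t' : Fin k → G) : Prop :=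
  Relation.EqvGen IsHurwitzMove t t'

/-- A group element `r` appears (as an entry) in the Hurwitz orbit of the tuple `t`. -/
def Appears {G : Type*} [Group G] {k : ℕ} (r : G) (t : Fin k → G) : Prop :=
  ∃ s : Fin k → G, SameHurwitzOrbit t s ∧ ∃ j, s j = r

/-- A tuple has two consecutive equal entries. -/
def HasConsecutiveEqualPair {G : Type*} [Group G] {k : ℕ} (t : Fin k → G) : Prop :=
  ∃ i : ℕ, ∃ h : i + 1 < k, t ⟨i, Nat.lt_of_succ_lt h⟩ = t ⟨i + 1, h⟩

/-- Replace the `p`-th entry of a tuple by two consecutive copies of its square. -/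
def doubleAt {G : Type*} [Group G] {m : ℕ} (t : Fin m → G) (p : Fin m) : Fin (m + 1) → G :=
  fun j =>
    if h1 : (j : ℕ) < (p : ℕ) then t ⟨j, h1.trans p.isLt⟩
    else if h2 : (j : ℕ) ≤ (p : ℕ) + 1 then (t p) ^ 2
    else t ⟨(j : ℕ) - 1, by have := j.isLt; omega⟩

/-- `ω = e^(2πi/3)`. -/
def ω : ℂ := Complex.exp (2 * Real.pi * Complex.I / 3)

def AMat : Matrix (Fin 2) (Fin 2) ℂ := !![1, 0; 0, ω]

def BMat : Matrix (Fin 2) (Fin 2) ℂ :=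
  !![(ω - ω ^ 2) / 3, ω ^ 2; (-2 * ω ^ 2) / 3, (-ω - 2 * ω ^ 2) / 3]

/-- The complex reflection group G₄ as the subgroup of GL(2,ℂ) generated by `AMat`, `BMat`. -/
def G4 : Subgroup (GL (Fin 2) ℂ) :=
  Subgroup.closure {g : GL (Fin 2) ℂ |
    (g : Matrix (Fin 2) (Fin 2) ℂ) = AMat ∨ (g : Matrix (Fin 2) (Fin 2) ℂ) = BMat}

/-- The matrix underlying an element of G₄. -/
def mat (t : G4) : Matrix (Fin 2) (Fin 2) ℂ := ((t : GL (Fin 2) ℂ) : Matrix (Fin 2) (Fin 2) ℂ)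

/-- A reflection in G₄: a non-identity element with eigenvalue 1. -/
def IsReflection (t : G4) : Prop := t ≠ 1 ∧ (mat t - 1).det = 0

/-- The conjugacy class R₁ of reflections of determinant ω. -/
def R1 : Set G4 := {t | IsReflection t ∧ (mat t).det = ω}

/-- The conjugacy class R₂ of reflections of determinant ω². -/
def R2 : Set G4 := {t | IsReflection t ∧ (mat t).det = ω ^ 2}

/-- A Coxeter element of G₄: an element with a primitive 6th root of unity as eigenvalue. -/
def IsCoxeter (c : G4) : Prop :=
  ∃ ζ : ℂ, IsPrimitiveRoot ζ 6 ∧ (mat c - ζ • (1 : Matrix (Fin 2) (Fin 2) ℂ)).det = 0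

/-- The relators of G₅: a³, b³, abab(baba)⁻¹. -/
def g5Rels : Set (FreeGroup (Fin 2)) :=
  {FreeGroup.of 0 ^ 3, FreeGroup.of 1 ^ 3,
    FreeGroup.of 0 * FreeGroup.of 1 * FreeGroup.of 0 * FreeGroup.of 1 *
      (FreeGroup.of 1 * FreeGroup.of 0 * FreeGroup.of 1 * FreeGroup.of 0)⁻¹}

/-- The complex reflection group G₅, by its presentation ⟨a,b | a³ = b³ = 1, abab = baba⟩. -/
abbrev G5 := PresentedGroup g5Rels

def ga : G5 := PresentedGroup.of 0
def gb : G5 := PresentedGroup.of 1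

/-- The conjugacy class of `a` in G₅. -/
def S1 : Set G5 := {t | IsConj ga t}
/-- The conjugacy class of `b` in G₅. -/
def S2 : Set G5 := {t | IsConj gb t}
/-- The conjugacy class of `a²` in G₅. -/
def S3 : Set G5 := {t | IsConj (ga ^ 2) t}
/-- The conjugacy class of `b²` in G₅. -/
def S4 : Set G5 := {t | IsConj (gb ^ 2) t}

/-- A reflection in G₅: a conjugate of a, b, a², or b². -/
def IsReflection5 (t : G5) : Prop := t ∈ S1 ∨ t ∈ S2 ∨ t ∈ S3 ∨ t ∈ S4

/-- A Coxeter element of G₅: an element of order 12. -/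
def IsCoxeter5 (c : G5) : Prop := orderOf c = 12


lemma g5c_fix {G : Type*} [Group G] {a b : G} (ha : a ^ 3 = 1) (hb : b ^ 3 = 1)
    (hab : a * b * a * b = b * a * b * a) :
    b * (a * (b⁻¹ * a * b) * a⁻¹) * b⁻¹ = a * (b⁻¹ * a * b) * a⁻¹ := by
  have ha2 : a * a = a⁻¹ := by
    rw [eq_inv_iff_mul_eq_one, ← ha, pow_three']
  have hb2 : b * b = b⁻¹ := by
    rw [eq_inv_iff_mul_eq_one, ← hb, pow_three']
  obtain ⟨z, hz⟩ : ∃ z, z = a * b * a * b := ⟨_, rfl⟩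
  have hza : z * a = a * z := by
    calc z * a = a * (b * a * b * a) := by rw [hz]; group
      _ = a * z := by rw [← hab, hz]
  have hzb : z * b = b * z := by
    calc z * b = (b * a * b * a) * b := by rw [hz, hab]
      _ = b * z := by rw [hz]; group
  obtain ⟨c, hc⟩ : ∃ c, c = z⁻¹ := ⟨_, rfl⟩
  have ca : a * c = c * a := by
    have : Commute z a := hza
    rw [hc]; exact (this.inv_left).eq.symm
  have cb : b * c = c * b := by
    have : Commute z b := hzb
    rw [hc]; exact (this.inv_left).eq.symm
  have cai : a⁻¹ * c = c * a⁻¹ := by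
    have : Commute a c := ca
    exact this.inv_left.eq
  have ca' : ∀ x, a * (c * x) = c * (a * x) := fun x => by
    rw [← mul_assoc, ca, mul_assoc]
  have cb' : ∀ x, b * (c * x) = c * (b * x) := fun x => by
    rw [← mul_assoc, cb, mul_assoc]
  have cai' : ∀ x, a⁻¹ * (c * x) = c * (a⁻¹ * x) := fun x => by
    rw [← mul_assoc, cai, mul_assoc]
  have e1 : b⁻¹ = c * (a * b * a) := by
    rw [hc, hz]; group
  have e2 : a⁻¹ = c * (b * a * b) := by
    rw [hc, hz, hab]; group
  have e3 : a⁻¹ * b⁻¹ = c * (b * a) := by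
    rw [hc, hz, hab]; group
  have key : a * (b⁻¹ * a * b) * a⁻¹ = c * (c * (c * (c * (b * b)))) := by
    calc a * (b⁻¹ * a * b) * a⁻¹ = a * ((c * (a * b * a)) * a * b) * (c * (b * a * b)) := by
          rw [← e1, ← e2]
      _ = c * (c * ((a * a) * (b * ((a * a) * ((b * b) * (a * b)))))) := by
          simp only [mul_assoc, ca', cb']
      _ = c * (c * (a⁻¹ * (b * ((a⁻¹ * b⁻¹) * (a * b))))) := by
          rw [ha2, hb2]; simp only [mul_assoc]
      _ = c * (c * (c * (a⁻¹ * ((b * b) * ((a * a) * b))))) := by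
          rw [e3]; simp only [mul_assoc, cb', cai']
      _ = c * (c * (c * ((a⁻¹ * b⁻¹) * (a⁻¹ * b)))) := by
          rw [ha2, hb2]; simp only [mul_assoc]
      _ = c * (c * (c * (c * (b * b)))) := by
          rw [e3]; simp only [mul_assoc, mul_inv_cancel_left]
  rw [key, mul_inv_eq_iff_eq_mul]
  simp only [mul_assoc, cb']

lemma g5c_rot {G : Type*} [Group G] {a b : G} (hb : b ^ 3 = 1)
    (hab : a * b * a * b = b * a * b * a) :
    a * (b * a * b⁻¹) * a⁻¹ = b⁻¹ * a * b := by
  have hb2 : b * b = b⁻¹ := by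
    rw [eq_inv_iff_mul_eq_one, ← hb, pow_three']
  have h2 : a * (b * a * b) = (b * a * b) * a := by
    simpa only [mul_assoc] using hab
  calc a * (b * a * b⁻¹) * a⁻¹ = a * (b * a * b) * b * a⁻¹ := by rw [← hb2]; group
    _ = b * (a * b * a * b) * a⁻¹ := by rw [h2]; group
    _ = (b * b) * a * b := by rw [hab]; group
    _ = b⁻¹ * a * b := by rw [hb2]

/-- The eight reflections. -/
def g5f {G : Type*} [Group G] (a b : G) : Fin 8 → G :=
  ![a, b * a * b⁻¹, b⁻¹ * a * b, a * (b⁻¹ * a * b) * a⁻¹,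
    b, a * b * a⁻¹, a⁻¹ * b * a, b * (a⁻¹ * b * a) * b⁻¹]

def g5PA : Equiv.Perm (Fin 4) := ⟨![0, 2, 3, 1], ![0, 3, 1, 2], by decide, by decide⟩
def g5PB : Equiv.Perm (Fin 4) := ⟨![1, 2, 0, 3], ![2, 0, 1, 3], by decide, by decide⟩

def g5sa : Equiv.Perm (Fin 8) :=
  ⟨![0, 2, 3, 1, 5, 6, 4, 7], ![0, 3, 1, 2, 6, 4, 5, 7], by decide, by decide⟩
def g5sb : Equiv.Perm (Fin 8) :=
  ⟨![1, 2, 0, 3, 4, 6, 7, 5], ![2, 0, 1, 3, 4, 7, 5, 6], by decide, by decide⟩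

/-- `T i j` is the index of the conjugate of `f j` by `(f i)⁻¹`. -/
def g5T : Fin 8 → Fin 8 → Fin 8 :=
  ![![0, 3, 1, 2, 6, 4, 5, 7], ![2, 1, 3, 0, 7, 5, 4, 6], ![3, 0, 2, 1, 5, 7, 6, 4],
    ![1, 2, 0, 3, 4, 6, 7, 5], ![2, 0, 1, 3, 4, 7, 5, 6], ![3, 1, 0, 2, 6, 5, 7, 4],
    ![1, 3, 2, 0, 7, 4, 6, 5], ![0, 2, 3, 1, 5, 6, 4, 7]]

/-- The index in the first class commuting with a given index in the second class. -/
def g5C : Fin 8 → Fin 8 := ![0, 1, 2, 3, 3, 1, 2, 0]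

lemma g5F_inj : ∀ i j, g5f g5PA g5PB i = g5f g5PA g5PB j → i = j := by decide

set_option maxRecDepth 100000 in
lemma g5F_T : ∀ i j, (g5f g5PA g5PB i)⁻¹ * g5f g5PA g5PB j * g5f g5PA g5PB i
    = g5f g5PA g5PB (g5T i j) := by decide

lemma g5sa_lt : ∀ i, (g5sa i < 4 ↔ i < 4) := by decide
lemma g5sb_lt : ∀ i, (g5sb i < 4 ↔ i < 4) := by decide

lemma g5f_map {G H : Type*} [Group G] [Group H] (φ : G →* H) (a b : G) (i : Fin 8) :
    φ (g5f a b i) = g5f (φ a) (φ b) i := by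
  fin_cases i <;> simp [g5f]

lemma g5f_sa {G : Type*} [Group G] {a b : G} (ha : a ^ 3 = 1) (hb : b ^ 3 = 1)
    (hab : a * b * a * b = b * a * b * a) (i : Fin 8) :
    a * g5f a b i * a⁻¹ = g5f a b (g5sa i) := by
  have ha2 : a * a = a⁻¹ := by
    rw [eq_inv_iff_mul_eq_one, ← ha, pow_three']
  have r := g5c_rot hb hab
  have f7 := g5c_fix hb ha hab.symm
  fin_cases i
  · show a * a * a⁻¹ = a
    group
  · exact r
  · rfl
  · show a * (a * (b⁻¹ * a * b) * a⁻¹) * a⁻¹ = b * a * b⁻¹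
    rw [← r]
    calc _ = (a * a * a) * (b * a * b⁻¹) * (a * a * a)⁻¹ := by group
      _ = _ := by rw [← pow_three', ha]; group
  · rfl
  · show a * (a * b * a⁻¹) * a⁻¹ = a⁻¹ * b * a
    calc _ = (a * a) * b * (a * a)⁻¹ := by group
      _ = _ := by rw [ha2]; group
  · show a * (a⁻¹ * b * a) * a⁻¹ = b
    group
  · exact f7

lemma g5f_sb {G : Type*} [Group G] {a b : G} (ha : a ^ 3 = 1) (hb : b ^ 3 = 1)
    (hab : a * b * a * b = b * a * b * a) (i : Fin 8) :
    b * g5f a b i * b⁻¹ = g5f a b (g5sb i) := by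
  have h := fun i => g5f_sa hb ha hab.symm i
  fin_cases i
  · exact h 4
  · exact h 5
  · exact h 6
  · exact h 7
  · exact h 0
  · exact h 1
  · exact h 2
  · exact h 3

lemma g5f_conj {G : Type*} [Group G] {a b : G} (ha : a ^ 3 = 1) (hb : b ^ 3 = 1)
    (hab : a * b * a * b = b * a * b * a) (hgen : Subgroup.closure {a, b} = ⊤) (g : G) :
    ∃ σ : Equiv.Perm (Fin 8), ∀ i, g * g5f a b i * g⁻¹ = g5f a b (σ i) ∧ (σ i < 4 ↔ i < 4) := by
  have hg : g ∈ Subgroup.closure {a, b} := hgen ▸ Subgroup.mem_top g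
  induction hg using Subgroup.closure_induction with
  | mem x hx =>
    rcases hx with rfl | rfl
    · exact ⟨g5sa, fun i => ⟨g5f_sa ha hb hab i, g5sa_lt i⟩⟩
    · exact ⟨g5sb, fun i => ⟨g5f_sb ha hb hab i, g5sb_lt i⟩⟩
  | one => exact ⟨1, fun i => by simp⟩
  | mul x y _ _ hx hy =>
    obtain ⟨σ, hσ⟩ := hx
    obtain ⟨τ, hτ⟩ := hy
    refine ⟨σ * τ, fun i => ⟨?_, ?_⟩⟩
    · rw [Equiv.Perm.mul_apply, ← (hσ _).1, ← (hτ _).1]; group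
    · rw [Equiv.Perm.mul_apply, (hσ _).2, (hτ _).2]
  | inv x _ hx =>
    obtain ⟨σ, hσ⟩ := hx
    refine ⟨σ⁻¹, fun i => ?_⟩
    obtain ⟨h1, h2⟩ := hσ (σ⁻¹ i)
    rw [← Equiv.Perm.mul_apply, mul_inv_cancel, Equiv.Perm.one_apply] at h1 h2
    exact ⟨by rw [← h1]; group, h2.symm⟩

def g5m (p : Fin 8 × Fin 8) : Fin 8 × Fin 8 := (p.2, g5T p.2 p.1)

lemma g5_idx : ∀ i j : Fin 8, i < 4 → ¬ j < 4 → g5T j i ≠ i →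
    g5T (g5T (g5T j i) j) (g5T j i) = i ∧ g5T i (g5T (g5T j i) j) = j := by decide

lemma g5_idx2 : ∀ i j : Fin 8, i < 4 → ¬ j < 4 → g5T j i ≠ i →
    g5T j i < 4 ∧ ¬ g5T (g5T j i) j < 4 ∧ g5T (g5T j i) j ≠ j := by decide

lemma g5_idx3 : ∀ i j : Fin 8, i < 4 → ¬ j < 4 → g5T j i ≠ i →
    ∀ k : Fin 8, k < 4 → k = i ∨ k = g5T j i ∨ k = g5C j ∨ k = g5C (g5T (g5T j i) j) := by decide

lemma g5_idxC : ∀ j : Fin 8, ¬ j < 4 → g5C j < 4 ∧ g5T j (g5C j) = g5C j ∧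
    ∀ k < 4, g5T j k = k → k = g5C j := by decide

lemma g5_orbit {G : Type*} [Group G] {x y z w : G} (h1 : y⁻¹ * x * y = z) (h2 : z⁻¹ * y * z = w)
    (h3 : w⁻¹ * z * w = x) (h4 : x⁻¹ * w * x = y) (s : Fin 2 → G) :
    SameHurwitzOrbit ![x, y] s ↔ s = ![x, y] ∨ s = ![y, z] ∨ s = ![z, w] ∨ s = ![w, x] := by
  have mv : ∀ t t' : Fin 2 → G, IsHurwitzMove t t' ↔ t' = ![t 1, (t 1)⁻¹ * t 0 * t 1] := by
    intro t t'
    constructor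
    · rintro ⟨i, hi, e1, e2, -⟩
      obtain rfl : i = 0 := by omega
      ext k
      fin_cases k
      · exact e1
      · exact e2
    · rintro rfl
      refine ⟨0, by omega, rfl, rfl, ?_⟩
      intro j hj hj'
      omega
  have m1 : IsHurwitzMove ![x, y] ![y, z] := by rw [mv]; simp [h1]
  have m2 : IsHurwitzMove ![y, z] ![z, w] := by rw [mv]; simp [h2]
  have m3 : IsHurwitzMove ![z, w] ![w, x] := by rw [mv]; simp [h3]
  have m4 : IsHurwitzMove ![w, x] ![x, y] := by rw [mv]; simp [h4]
  have det : ∀ {t u v : Fin 2 → G}, IsHurwitzMove t u → IsHurwitzMove t v → u = v := by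
    intro t u v hu hv
    rw [mv] at hu hv
    rw [hu, hv]
  have det' : ∀ {t u v : Fin 2 → G}, IsHurwitzMove u t → IsHurwitzMove v t → u = v := by
    intro t u v hu hv
    rw [mv] at hu hv
    rw [hu] at hv
    have e0 : u 1 = v 1 := congrFun hv 0
    have e1 : (u 1)⁻¹ * u 0 * u 1 = (v 1)⁻¹ * v 0 * v 1 := congrFun hv 1
    rw [e0] at e1
    have e2 : u 0 = v 0 := by simpa using e1
    ext k
    fin_cases k
    · exact e2
    · exact e0
  constructor
  · intro h
    have inv : ∀ t t' : Fin 2 → G, SameHurwitzOrbit t t' →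
        ((t = ![x, y] ∨ t = ![y, z] ∨ t = ![z, w] ∨ t = ![w, x]) ↔
         (t' = ![x, y] ∨ t' = ![y, z] ∨ t' = ![z, w] ∨ t' = ![w, x])) := by
      intro t t' h
      induction h with
      | rel t t' h =>
        constructor
        · rintro (rfl | rfl | rfl | rfl)
          · exact Or.inr (Or.inl (det h m1))
          · exact Or.inr (Or.inr (Or.inl (det h m2)))
          · exact Or.inr (Or.inr (Or.inr (det h m3)))
          · exact Or.inl (det h m4)
        · rintro (rfl | rfl | rfl | rfl)
          · exact Or.inr (Or.inr (Or.inr (det' h m4)))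
          · exact Or.inl (det' h m1)
          · exact Or.inr (Or.inl (det' h m2))
          · exact Or.inr (Or.inr (Or.inl (det' h m3)))
      | refl => rfl
      | symm _ _ _ ih => exact ih.symm
      | trans _ _ _ _ _ ih1 ih2 => exact ih1.trans ih2
    exact (inv _ _ h).1 (Or.inl rfl)
  · have o1 : SameHurwitzOrbit ![x, y] ![y, z] := Relation.EqvGen.rel _ _ m1
    have o2 : SameHurwitzOrbit ![x, y] ![z, w] := o1.trans _ _ _ (Relation.EqvGen.rel _ _ m2)
    have o3 : SameHurwitzOrbit ![x, y] ![w, x] := o2.trans _ _ _ (Relation.EqvGen.rel _ _ m3)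
    rintro (rfl | rfl | rfl | rfl)
    · exact Relation.EqvGen.refl _
    · exact o1
    · exact o2
    · exact o3

lemma ncard_four {α : Type*} {x y z w : α} (h1 : x ≠ y) (h2 : x ≠ z) (h3 : x ≠ w) (h4 : y ≠ z)
    (h5 : y ≠ w) (h6 : z ≠ w) : ({x, y, z, w} : Set α).ncard = 4 := by
  classical
  have : ({x, y, z, w} : Set α) = (({x, y, z, w} : Finset α) : Set α) := by simp
  rw [this, Set.ncard_coe_finset]
  simp [*]

theorem g5_core {G : Type*} [Group G] (a b : G) (ha : a ^ 3 = 1) (hb : b ^ 3 = 1)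
    (hab : a * b * a * b = b * a * b * a) (hgen : Subgroup.closure {a, b} = ⊤)
    (φ : G →* Equiv.Perm (Fin 4)) (hφa : φ a = g5PA) (hφb : φ b = g5PB)
    (Ri Rj : Set G) (hRi : Ri = {t | IsConj a t}) (hRj : Rj = {t | IsConj b t})
    (t₁ t₃ : G) (h₁ : t₁ ∈ Ri) (h₃ : t₃ ∈ Rj) (hcomm : ¬ Commute t₁ t₃) :
    (∀ u ∈ Rj, ∃! s : G, s ∈ Ri ∧ Commute s u) ∧
    {s : Fin 2 → G | SameHurwitzOrbit ![t₁, t₃] s}.ncard = 4 ∧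
    ∃ t₂ t₄ s₃ s₄ : G, t₂ ∈ Ri ∧ t₄ ∈ Rj ∧
      {r : G | Appears r ![t₁, t₃]} = {t₁, t₂, t₃, t₄} ∧
      ({t₁, t₂, t₃, t₄} : Set G).ncard = 4 ∧
      s₃ ∈ Ri ∧ Commute s₃ t₃ ∧ s₄ ∈ Ri ∧ Commute s₄ t₄ ∧
      Ri = {t₁, t₂, s₃, s₄} := by
  obtain ⟨f, hf⟩ : ∃ f, f = g5f a b := ⟨_, rfl⟩
  have hφ : ∀ i, φ (f i) = g5f g5PA g5PB i := fun i => by rw [hf, g5f_map, hφa, hφb]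
  have inj : ∀ i j, f i = f j → i = j := fun i j h => g5F_inj i j (by rw [← hφ, ← hφ, h])
  have hconj := g5f_conj ha hb hab hgen
  rw [← hf] at hconj
  have hT : ∀ i j, (f i)⁻¹ * f j * f i = f (g5T i j) := by
    intro i j
    obtain ⟨σ, hσ⟩ := hconj (f i)⁻¹
    have h1 := (hσ j).1
    rw [inv_inv] at h1
    have h2 := congrArg φ h1
    simp only [map_mul, map_inv, hφ] at h2
    rw [g5F_T] at h2
    rw [h1, g5F_inj _ _ h2]
  have hC : ∀ i j, Commute (f j) (f i) ↔ g5T i j = j := by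
    intro i j
    constructor
    · intro h
      apply inj
      rw [← hT, mul_assoc, h.eq, inv_mul_cancel_left]
    · intro h
      have := hT i j
      rw [h, mul_assoc, inv_mul_eq_iff_eq_mul] at this
      exact this
  have f0 : f 0 = a := by rw [hf]; rfl
  have f4 : f 4 = b := by rw [hf]; rfl
  have m1 : ∀ t, t ∈ Ri ↔ ∃ i, i < 4 ∧ t = f i := by
    intro t
    rw [hRi, Set.mem_ofPred_eq]
    constructor
    · intro h
      obtain ⟨c, hc⟩ := isConj_iff.1 h
      obtain ⟨σ, hσ⟩ := hconj c
      refine ⟨σ 0, (hσ 0).2.2 (by decide), ?_⟩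
      rw [← (hσ 0).1, f0, hc]
    · rintro ⟨i, hi, rfl⟩
      rw [hf]
      have : i = 0 ∨ i = 1 ∨ i = 2 ∨ i = 3 := by revert i; decide
      rcases this with rfl | rfl | rfl | rfl
      · exact IsConj.refl _
      · exact isConj_iff.2 ⟨b, rfl⟩
      · refine isConj_iff.2 ⟨b⁻¹, ?_⟩
        show _ = b⁻¹ * a * b
        group
      · refine isConj_iff.2 ⟨a * b⁻¹, ?_⟩
        show _ = a * (b⁻¹ * a * b) * a⁻¹
        group
  have m2 : ∀ t, t ∈ Rj ↔ ∃ i, ¬ i < 4 ∧ t = f i := by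
    intro t
    rw [hRj, Set.mem_ofPred_eq]
    constructor
    · intro h
      obtain ⟨c, hc⟩ := isConj_iff.1 h
      obtain ⟨σ, hσ⟩ := hconj c
      refine ⟨σ 4, fun h => absurd ((hσ 4).2.1 h) (by decide), ?_⟩
      rw [← (hσ 4).1, f4, hc]
    · rintro ⟨i, hi, rfl⟩
      rw [hf]
      have : i = 4 ∨ i = 5 ∨ i = 6 ∨ i = 7 := by revert i; decide
      rcases this with rfl | rfl | rfl | rfl
      · exact IsConj.refl _
      · exact isConj_iff.2 ⟨a, rfl⟩
      · refine isConj_iff.2 ⟨a⁻¹, ?_⟩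
        show _ = a⁻¹ * b * a
        group
      · refine isConj_iff.2 ⟨b * a⁻¹, ?_⟩
        show _ = b * (a⁻¹ * b * a) * b⁻¹
        group
  obtain ⟨i, hi, rfl⟩ := (m1 _).1 h₁
  obtain ⟨j, hj, rfl⟩ := (m2 _).1 h₃
  rw [hC] at hcomm
  obtain ⟨k3, k4⟩ := g5_idx i j hi hj hcomm
  obtain ⟨k5, k6, k7⟩ := g5_idx2 i j hi hj hcomm
  have k8 := g5_idx3 i j hi hj hcomm
  obtain ⟨k, hk⟩ : ∃ k, k = g5T j i := ⟨_, rfl⟩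
  obtain ⟨l, hl⟩ : ∃ l, l = g5T k j := ⟨_, rfl⟩
  rw [← hk] at k3 k4 k5 k6 k7 k8 hcomm
  rw [← hl] at k3 k4 k6 k7 k8
  have q1 := hT j i
  have q2 := hT k j
  have q3 := hT l k
  have q4 := hT i l
  rw [← hk] at q1
  rw [← hl] at q2
  rw [k3] at q3
  rw [k4] at q4
  have orb := g5_orbit q1 q2 q3 q4
  have nij : f i ≠ f j := fun h => hj (inj _ _ h ▸ hi)
  have nil : f i ≠ f l := fun h => k6 (inj _ _ h ▸ hi)
  have nkj : f k ≠ f j := fun h => hj (inj _ _ h ▸ k5)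
  have nkl : f k ≠ f l := fun h => k6 (inj _ _ h ▸ k5)
  have nik : f i ≠ f k := fun h => hcomm (inj _ _ h).symm
  have njl : f j ≠ f l := fun h => k7 (inj _ _ h).symm
  obtain ⟨c1, c2, c3⟩ := g5_idxC j hj
  obtain ⟨d1, d2, d3⟩ := g5_idxC l k6
  refine ⟨?_, ?_, f k, f l, f (g5C j), f (g5C l), (m1 _).2 ⟨_, k5, rfl⟩, (m2 _).2 ⟨_, k6, rfl⟩,
    ?_, ncard_four nik nij nil nkj nkl njl, (m1 _).2 ⟨_, c1, rfl⟩, (hC _ _).2 c2,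
    (m1 _).2 ⟨_, d1, rfl⟩, (hC _ _).2 d2, ?_⟩
  · intro u hu
    obtain ⟨n, hn, rfl⟩ := (m2 _).1 hu
    obtain ⟨e1, e2, e3⟩ := g5_idxC n hn
    refine ⟨f (g5C n), ⟨(m1 _).2 ⟨_, e1, rfl⟩, (hC _ _).2 e2⟩, ?_⟩
    rintro s ⟨hs, hs'⟩
    obtain ⟨p, hp, rfl⟩ := (m1 _).1 hs
    rw [e3 p hp ((hC _ _).1 hs')]
  · have : {s : Fin 2 → G | SameHurwitzOrbit ![f i, f j] s}
        = {![f i, f j], ![f j, f k], ![f k, f l], ![f l, f i]} := by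
      ext s
      rw [Set.mem_ofPred_eq, orb]
      simp
    rw [this]
    apply ncard_four
    · exact fun h => nij (congrFun h 0)
    · exact fun h => nik (congrFun h 0)
    · exact fun h => nil (congrFun h 0)
    · exact fun h => nkj (congrFun h 0).symm
    · exact fun h => njl (congrFun h 0)
    · exact fun h => nkl (congrFun h 0)
  · ext r
    simp only [Set.mem_ofPred_eq, Appears, orb, Set.mem_insert_iff, Set.mem_singleton_iff]
    constructor
    · rintro ⟨s, hs, n, rfl⟩
      rcases hs with rfl | rfl | rfl | rfl <;> fin_cases n <;> simp
    · rintro (rfl | rfl | rfl | rfl)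
      · exact ⟨_, Or.inl rfl, 0, rfl⟩
      · exact ⟨_, Or.inr (Or.inl rfl), 1, rfl⟩
      · exact ⟨_, Or.inl rfl, 1, rfl⟩
      · exact ⟨_, Or.inr (Or.inr (Or.inr rfl)), 0, rfl⟩
  · ext r
    simp only [Set.mem_insert_iff, Set.mem_singleton_iff]
    constructor
    · intro hr
      obtain ⟨n, hn, rfl⟩ := (m1 _).1 hr
      rcases k8 n hn with h | h | h | h <;> rw [h] <;> simp
    · rintro (rfl | rfl | rfl | rfl)
      · exact h₁
      · exact (m1 _).2 ⟨_, k5, rfl⟩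
      · exact (m1 _).2 ⟨_, c1, rfl⟩
      · exact (m1 _).2 ⟨_, d1, rfl⟩

lemma ga_cube : ga ^ 3 = 1 := by
  have h : FreeGroup.of 0 ^ 3 ∈ g5Rels := by simp [g5Rels]
  exact PresentedGroup.one_of_mem h

lemma gb_cube : gb ^ 3 = 1 := by
  have h : FreeGroup.of 1 ^ 3 ∈ g5Rels := by simp [g5Rels]
  exact PresentedGroup.one_of_mem h

lemma gab_rel : ga * gb * ga * gb = gb * ga * gb * ga := by
  have h : FreeGroup.of 0 * FreeGroup.of 1 * FreeGroup.of 0 * FreeGroup.of 1 *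
      (FreeGroup.of 1 * FreeGroup.of 0 * FreeGroup.of 1 * FreeGroup.of 0)⁻¹ ∈ g5Rels := by
    simp [g5Rels]
  exact mul_inv_eq_one.1 (PresentedGroup.one_of_mem h)

lemma g5_gen : Subgroup.closure {ga, gb} = (⊤ : Subgroup G5) := by
  rw [← PresentedGroup.closure_range_of]
  congr 1
  ext x
  simp only [Set.mem_insert_iff, Set.mem_singleton_iff, Set.mem_range, Fin.exists_fin_two]
  exact or_congr eq_comm eq_comm

lemma g5_hom (A B : Equiv.Perm (Fin 4)) (hA : A ^ 3 = 1) (hB : B ^ 3 = 1)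
    (hAB : A * B * A * B = B * A * B * A) :
    ∃ φ : G5 →* Equiv.Perm (Fin 4), φ ga = A ∧ φ gb = B := by
  have h : ∀ r ∈ g5Rels, FreeGroup.lift ![A, B] r = 1 := by
    rintro r (rfl | rfl | rfl)
    · simpa using hA
    · simpa using hB
    · simp only [map_mul, map_inv, FreeGroup.lift_apply_of]
      exact mul_inv_eq_one.2 hAB
  exact ⟨PresentedGroup.toGroup h, PresentedGroup.toGroup.of h, PresentedGroup.toGroup.of h⟩

theorem g5_adjacent_classes_pair_orbit (Ri Rj : Set G5)
    (h : (Ri = S1 ∧ Rj = S2) ∨ (Ri = S3 ∧ Rj = S4))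
    (t₁ t₃ : G5) (h₁ : t₁ ∈ Ri) (h₃ : t₃ ∈ Rj) (hcomm : ¬ Commute t₁ t₃) :
    (∀ u ∈ Rj, ∃! s : G5, s ∈ Ri ∧ Commute s u) ∧
    {s : Fin 2 → G5 | SameHurwitzOrbit ![t₁, t₃] s}.ncard = 4 ∧
    ∃ t₂ t₄ s₃ s₄ : G5, t₂ ∈ Ri ∧ t₄ ∈ Rj ∧
      {r : G5 | Appears r ![t₁, t₃]} = {t₁, t₂, t₃, t₄} ∧
      ({t₁, t₂, t₃, t₄} : Set G5).ncard = 4 ∧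
      s₃ ∈ Ri ∧ Commute s₃ t₃ ∧ s₄ ∈ Ri ∧ Commute s₄ t₄ ∧
      Ri = {t₁, t₂, s₃, s₄} := by

  rcases h with ⟨hi, hj⟩ | ⟨hi, hj⟩
  · obtain ⟨φ, hA, hB⟩ := g5_hom g5PA g5PB (by decide) (by decide) (by decide)
    exact g5_core ga gb ga_cube gb_cube gab_rel g5_gen φ hA hB Ri Rj hi hj t₁ t₃ h₁ h₃ hcomm
  · obtain ⟨φ, hA, hB⟩ := g5_hom (g5PA ^ 2) (g5PB ^ 2) (by decide) (by decide) (by decide)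
    have ea : ga ^ 2 = ga⁻¹ := by rw [eq_inv_iff_mul_eq_one, ← ga_cube]; group
    have eb : gb ^ 2 = gb⁻¹ := by rw [eq_inv_iff_mul_eq_one, ← gb_cube]; group
    refine g5_core (ga ^ 2) (gb ^ 2) ?_ ?_ ?_ ?_ φ ?_ ?_ Ri Rj hi hj t₁ t₃ h₁ h₃ hcomm
    · rw [ea, inv_pow, ga_cube, inv_one]
    · rw [eb, inv_pow, gb_cube, inv_one]
    · rw [ea, eb]
      have := congrArg (·⁻¹) gab_rel
      simp only [_root_.mul_inv_rev] at this
      simpa only [mul_assoc] using this.symm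
    · rw [eq_top_iff, ← g5_gen, Subgroup.closure_le, ea, eb]
      rintro x (rfl | rfl)
      · exact (Subgroup.inv_mem_iff _).1 (Subgroup.subset_closure (by simp))
      · exact (Subgroup.inv_mem_iff _).1 (Subgroup.subset_closure (by simp))
    · rw [map_pow, hA]; decide
    · rw [map_pow, hB]; decide
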